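/- arXiv:1403.7150 — 7 statements merged into one kernel-verified Lean document; each statement's English description precedes it below -/
import Mathlib

section
/- Let b > 0, x > 0, and let p : ℝ → ℝ be a continuous nonnegative function that is nondecreasing on [0, x] and satisfies p(0) > 0. Then ∫_0^x exp( (2/b²)·∫_v^x p(u)/u² du ) dv = +∞ (equivalently, I₂ := −∫_0^x exp( (2/b²)·∫_v^x p(u)/u² du ) dv = −∞). -/
open MeasureTheory Filter

lemma inner_bound (x : ℝ) (p : ℝ → ℝ)
    (hp_cont : Continuous p) 
    (hp_mono : MonotoneOn p (Set.Icc 0 x)) (v : ℝ) (hv : 0 < v) (hvx : v < x) :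
    p 0 * (1 / v - 1 / x) ≤ ∫ u in v..x, p u / u ^ 2 := by
  have hne : ∀ u ∈ Set.uIcc v x, u ≠ 0 := by
    intro u hu
    rw [Set.uIcc_of_le hvx.le] at hu
    exact (hv.trans_le hu.1).ne'
  have hne2 : ∀ u ∈ Set.uIcc v x, u ^ 2 ≠ 0 := fun u hu => pow_ne_zero 2 (hne u hu)
  have i1 : IntervalIntegrable (fun u => p 0 / u ^ 2) volume v x :=
    ContinuousOn.intervalIntegrable (continuousOn_const.div (by fun_prop) hne2)
  have i2 : IntervalIntegrable (fun u => p u / u ^ 2) volume v x :=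
    ContinuousOn.intervalIntegrable (hp_cont.continuousOn.div (by fun_prop) hne2)
  have h1 : ∫ u in v..x, p 0 / u ^ 2 = p 0 * (1 / v - 1 / x) := by
    rw [intervalIntegral.integral_eq_sub_of_hasDerivAt (f := fun u => - p 0 * u⁻¹) _ i1]
    · ring
    · intro u hu
      have := (hasDerivAt_inv (hne u hu)).const_mul (- p 0)
      have e : p 0 / u ^ 2 = - p 0 * (-(u ^ 2)⁻¹) := by ring
      rw [e]
      exact this
  rw [← h1]
  apply intervalIntegral.integral_mono_on hvx.le i1 i2
  intro u hu
  have h0 : 0 < u := hv.trans_le hu.1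
  have : p 0 ≤ p u := hp_mono ⟨le_rfl, (hv.trans hvx).le⟩ ⟨h0.le, hu.2⟩ h0.le
  gcongr

/-- Lemma A.2: if `p(0) > 0` (with `p` continuous, nonnegative and nondecreasing on `[0,x]`),
then `∫_0^x exp((2/b²) ∫_v^x p(u)/u² du) dv = +∞`, i.e. `I₂ = -∞`. -/
theorem stmt_1 (b x : ℝ) (hb : 0 < b) (hx : 0 < x) (p : ℝ → ℝ)
    (hp_cont : Continuous p) (hp_nonneg : ∀ u, 0 ≤ p u)
    (hp_mono : MonotoneOn p (Set.Icc 0 x)) (hp0 : 0 < p 0) :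
    (∫⁻ v in Set.Ioo (0 : ℝ) x, ENNReal.ofReal
      (Real.exp ((2 / b ^ 2) * ∫ u in v..x, p u / u ^ 2))) = ⊤ := by
  by_contra hcon
  set c : ℝ := 2 / b ^ 2 * p 0 with hc
  have hcpos : 0 < c := by positivity
  set K : ℝ := Real.exp (-(c / x)) * c with hK
  have hKpos : 0 < K := by positivity
  have hle : (∫⁻ v in Set.Ioo (0 : ℝ) x, ENNReal.ofReal (K * v⁻¹)) ≤
      ∫⁻ v in Set.Ioo (0 : ℝ) x, ENNReal.ofReal
      (Real.exp ((2 / b ^ 2) * ∫ u in v..x, p u / u ^ 2)) := by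
    apply setLIntegral_mono' measurableSet_Ioo
    intro v hv
    apply ENNReal.ofReal_le_ofReal
    have h1 := inner_bound x p hp_cont hp_mono v hv.1 hv.2
    have h2 : -(c / x) + c * v⁻¹ ≤ (2 / b ^ 2) * ∫ u in v..x, p u / u ^ 2 := by
      calc -(c / x) + c * v⁻¹ = (2 / b ^ 2) * (p 0 * (1 / v - 1 / x)) := by rw [hc]; ring
        _ ≤ _ := by gcongr
    calc K * v⁻¹ = Real.exp (-(c / x)) * (c * v⁻¹) := by rw [hK]; ring
      _ ≤ Real.exp (-(c / x)) * Real.exp (c * v⁻¹) := by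
        gcongr
        linarith [Real.add_one_le_exp (c * v⁻¹)]
      _ = Real.exp (-(c / x) + c * v⁻¹) := (Real.exp_add _ _).symm
      _ ≤ _ := Real.exp_le_exp.mpr h2
  have hfin := ne_top_of_le_ne_top hcon hle
  have hint : IntegrableOn (fun v : ℝ => K * v⁻¹) (Set.Ioo 0 x) := by
    refine (lintegral_ofReal_ne_top_iff_integrable ?_ ?_).mp hfin
    · exact (measurable_inv.const_mul K).aestronglyMeasurable
    · filter_upwards [ae_restrict_mem measurableSet_Ioo] with v hv
      have := hv.1
      simp only [Pi.zero_apply]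
      positivity
  have hint2 : IntegrableOn (fun v : ℝ => v⁻¹) (Set.Ioo 0 x) := by
    have := hint.const_mul K⁻¹
    unfold IntegrableOn
    simpa [← mul_assoc, hKpos.ne'] using this
  have h3 : IntervalIntegrable (fun v : ℝ => v⁻¹) volume 0 x := by
    rw [intervalIntegrable_iff_integrableOn_Ioo_of_le hx.le]
    exact hint2
  rw [intervalIntegrable_inv_iff] at h3
  rcases h3 with h | h
  · exact hx.ne h
  · exact h Set.left_mem_uIcc
end

section
/- Let b > 0, x > 0, α > 1, p₁ > 0 and p₂ ≥ 0, and let p(u) = p₁·(u + p₂)^α for u ≥ 0. Then I₁ := ∫_x^{+∞} exp( −(2/b²)·∫_x^v p(u)/u² du ) dv < +∞. -/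
open MeasureTheory Filter

/-- Example 2.5: for `p(u) = p₁ (u + p₂)^α` with `α > 1`, `I₁ < +∞`. -/
theorem stmt_4 (b x α p₁ p₂ : ℝ) (hb : 0 < b) (hx : 0 < x) (hα : 1 < α)
    (hp₁ : 0 < p₁) (hp₂ : 0 ≤ p₂) :
    (∫⁻ v in Set.Ioi x, ENNReal.ofReal
      (Real.exp (-(2 / b ^ 2) * ∫ u in x..v, p₁ * (u + p₂) ^ α / u ^ 2))) < ⊤ := by
  have hα' : 0 < α - 1 := by linarith
  set c : ℝ := 2 / b ^ 2 * (p₁ / (α - 1)) with hc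
  have hc0 : 0 < c := by positivity
  have hint : IntegrableOn (fun v : ℝ => Real.exp (-c * v ^ (α - 1))) (Set.Ioi 0) := by
    by_contra h
    have h1 := integral_exp_neg_mul_rpow hα' hc0
    rw [integral_undef h] at h1
    have h2 : 0 < c ^ (-1 / (α - 1)) * Real.Gamma (1 / (α - 1) + 1) :=
      mul_pos (Real.rpow_pos_of_pos hc0 _) (Real.Gamma_pos_of_pos (by positivity))
    linarith
  have hint2 : IntegrableOn
      (fun v : ℝ => Real.exp (c * x ^ (α - 1)) * Real.exp (-c * v ^ (α - 1))) (Set.Ioi x) :=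
    (hint.mono_set (Set.Ioi_subset_Ioi hx.le)).const_mul _
  refine lt_of_le_of_lt ?_ hint2.lintegral_lt_top
  refine setLIntegral_mono' measurableSet_Ioi ?_
  intro v hv
  have hv : x < v := hv
  apply ENNReal.ofReal_le_ofReal
  rw [← Real.exp_add]
  apply Real.exp_le_exp.mpr
  have hpos : ∀ u ∈ Set.uIcc x v, 0 < u := by
    intro u hu
    rw [Set.uIcc_of_le hv.le] at hu
    exact hx.trans_le hu.1
  have hz : (0 : ℝ) ∉ Set.uIcc x v := fun h => lt_irrefl _ (hpos 0 h)
  have hlow : (p₁ / (α - 1)) * (v ^ (α - 1) - x ^ (α - 1)) ≤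
      ∫ u in x..v, p₁ * (u + p₂) ^ α / u ^ 2 := by
    have e : ∫ u in x..v, p₁ * u ^ (α - 2) =
        (p₁ / (α - 1)) * (v ^ (α - 1) - x ^ (α - 1)) := by
      rw [intervalIntegral.integral_const_mul, integral_rpow (Or.inl (by linarith))]
      rw [show α - 2 + 1 = α - 1 by ring]
      ring
    rw [← e]
    apply intervalIntegral.integral_mono_on hv.le
    · exact (intervalIntegral.intervalIntegrable_rpow (Or.inr hz)).const_mul _
    · apply ContinuousOn.intervalIntegrable
      apply ContinuousOn.div
      · apply ContinuousOn.mul continuousOn_const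
        apply ContinuousOn.rpow_const (by fun_prop)
        intro u hu
        exact Or.inr (by linarith)
      · fun_prop
      · intro u hu
        exact (pow_pos (hpos u hu) 2).ne'
    · intro u hu
      have hu0 : 0 < u := hx.trans_le hu.1
      rw [mul_div_assoc]
      apply mul_le_mul_of_nonneg_left _ hp₁.le
      rw [Real.rpow_sub hu0, Real.rpow_two]
      gcongr
      linarith
  have := mul_le_mul_of_nonneg_left hlow (show 0 ≤ 2 / b ^ 2 by positivity)
  rw [hc]
  linarith
end

section
/- Let b > 0, x > 0, p₂ > 0 and p₁ ≥ 0, and let p(u) = p₂·u² + p₁·u for u ≥ 0. Then ∫_0^x exp( (2/b²)·∫_v^x p(u)/u² du ) dv = ∫_0^x (x/v)^{2p₁/b²} · exp( 2p₂·(x − v)/b² ) dv, and this integral is finite if and only if 2p₁ < b² (equivalently, I₂ > −∞ if and only if 2p₁ < b²). -/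
open MeasureTheory Filter

lemma aux_pt (b x p₁ p₂ : ℝ) (hb : 0 < b) (hx : 0 < x) (v : ℝ) (hv : v ∈ Set.Ioo 0 x) :
    Real.exp ((2 / b ^ 2) * ∫ u in v..x, (p₂ * u ^ 2 + p₁ * u) / u ^ 2)
      = (x / v) ^ (2 * p₁ / b ^ 2) * Real.exp (2 * p₂ * (x - v) / b ^ 2) := by
  have hv0 := hv.1
  have h0 : (0 : ℝ) ∉ Set.uIcc v x := by
    rw [Set.uIcc_of_le hv.2.le]
    exact fun h => absurd h.1 (not_le.2 hv0)
  have h1 : ∫ u in v..x, (p₂ * u ^ 2 + p₁ * u) / u ^ 2 = ∫ u in v..x, (p₂ + p₁ * u⁻¹) := by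
    apply intervalIntegral.integral_congr
    intro u hu
    have : u ≠ 0 := fun h => h0 (h ▸ hu)
    simp only
    field_simp
  have hi : IntervalIntegrable (fun u : ℝ => u⁻¹) volume v x :=
    intervalIntegral.intervalIntegrable_inv (fun u hu h => h0 (h ▸ hu)) continuousOn_id
  rw [h1, intervalIntegral.integral_add (by simp) (hi.const_mul _),
    intervalIntegral.integral_const_mul, integral_inv h0, intervalIntegral.integral_const,
    Real.rpow_def_of_pos (div_pos hx hv0), ← Real.exp_add, smul_eq_mul]
  congr 1
  field_simp
  ring

lemma aux_G (x a : ℝ) (hx : 0 < x) :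
    (∫⁻ v in Set.Ioo (0 : ℝ) x, ENNReal.ofReal (v ^ (-a))) < ⊤ ↔ a < 1 := by
  have h := intervalIntegral.integrableOn_Ioo_rpow_iff (s := -a) hx
  rw [neg_lt_neg_iff] at h
  rw [← h, IntegrableOn, Integrable, hasFiniteIntegral_iff_ofReal]
  · have : AEStronglyMeasurable (fun v : ℝ => v ^ (-a)) (volume.restrict (Set.Ioo 0 x)) :=
      (Measurable.pow_const measurable_id _).aestronglyMeasurable
    exact ⟨fun h => ⟨this, h⟩, fun h => h.2⟩
  · filter_upwards [ae_restrict_mem measurableSet_Ioo] with v hv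
    exact Real.rpow_nonneg hv.1.le _

/-- Example 2.6 (case of `I₂`): for `p(u) = p₂ u² + p₁ u`,
`∫_0^x exp((2/b²) ∫_v^x p(u)/u² du) dv = ∫_0^x (x/v)^{2p₁/b²} exp(2p₂(x-v)/b²) dv`,
and it is finite iff `2p₁ < b²` (equivalently `I₂ > -∞` iff `2p₁ < b²`). -/
theorem stmt_6 (b x p₁ p₂ : ℝ) (hb : 0 < b) (hx : 0 < x) (hp₂ : 0 < p₂) (hp₁ : 0 ≤ p₁) :
    (∫⁻ v in Set.Ioo (0 : ℝ) x, ENNReal.ofReal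
        (Real.exp ((2 / b ^ 2) * ∫ u in v..x, (p₂ * u ^ 2 + p₁ * u) / u ^ 2)))
      = (∫⁻ v in Set.Ioo (0 : ℝ) x, ENNReal.ofReal
        ((x / v) ^ (2 * p₁ / b ^ 2) * Real.exp (2 * p₂ * (x - v) / b ^ 2)))
    ∧ ((∫⁻ v in Set.Ioo (0 : ℝ) x, ENNReal.ofReal
        (Real.exp ((2 / b ^ 2) * ∫ u in v..x, (p₂ * u ^ 2 + p₁ * u) / u ^ 2))) < ⊤
      ↔ 2 * p₁ < b ^ 2) := by
  have h1 : (∫⁻ v in Set.Ioo (0 : ℝ) x, ENNReal.ofReal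
        (Real.exp ((2 / b ^ 2) * ∫ u in v..x, (p₂ * u ^ 2 + p₁ * u) / u ^ 2)))
      = (∫⁻ v in Set.Ioo (0 : ℝ) x, ENNReal.ofReal
        ((x / v) ^ (2 * p₁ / b ^ 2) * Real.exp (2 * p₂ * (x - v) / b ^ 2))) := by
    apply setLIntegral_congr_fun measurableSet_Ioo
    intro v hv
    simp only
    rw [aux_pt b x p₁ p₂ hb hx v hv]
  refine ⟨h1, ?_⟩
  rw [h1]
  have hb2 : 0 < b ^ 2 := by positivity
  have ha : 2 * p₁ < b ^ 2 ↔ 2 * p₁ / b ^ 2 < 1 := (div_lt_one hb2).symm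
  rw [ha]
  generalize 2 * p₁ / b ^ 2 = a
  rw [← aux_G x a hx]
  have key : ∀ v ∈ Set.Ioo 0 x, (x / v) ^ a = x ^ a * v ^ (-a) := by
    intro v hv
    rw [Real.div_rpow hx.le hv.1.le, Real.rpow_neg hv.1.le, div_eq_mul_inv]
  constructor
  · intro h
    refine lt_of_le_of_lt ?_ (ENNReal.mul_lt_top (ENNReal.ofReal_lt_top (r := x ^ (-a))) h)
    rw [← lintegral_const_mul' _ _ ENNReal.ofReal_ne_top]
    apply setLIntegral_mono' measurableSet_Ioo
    intro v hv
    rw [← ENNReal.ofReal_mul (by positivity)]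
    apply ENNReal.ofReal_le_ofReal
    rw [key v hv, ← mul_assoc, ← mul_assoc, ← Real.rpow_add hx]
    have h2 : 0 ≤ v ^ (-a) := Real.rpow_nonneg hv.1.le _
    have h3 : 1 ≤ Real.exp (2 * p₂ * (x - v) / b ^ 2) := by
      apply Real.one_le_exp
      have := sub_pos.2 hv.2
      positivity
    simp only [neg_add_cancel, Real.rpow_zero, one_mul]
    exact le_mul_of_one_le_right h2 h3
  · intro h
    refine lt_of_le_of_lt ?_ (ENNReal.mul_lt_top
      (ENNReal.ofReal_lt_top (r := x ^ a * Real.exp (2 * p₂ * x / b ^ 2))) h)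
    rw [← lintegral_const_mul' _ _ ENNReal.ofReal_ne_top]
    apply setLIntegral_mono' measurableSet_Ioo
    intro v hv
    rw [← ENNReal.ofReal_mul (by positivity)]
    apply ENNReal.ofReal_le_ofReal
    rw [key v hv, mul_right_comm]
    have h2 : 0 ≤ v ^ (-a) := Real.rpow_nonneg hv.1.le _
    have h4 := hv.1
    gcongr
    linarith
end

section
/- Let b > 0, c > 0, p₂ > 0, p₁ ≥ 0 and p₀ ≥ 0, and define φ(v) = exp( −(2/b²)·∫_c^v (p₂·u² + p₁·u + p₀)/u² du ) for v ≥ c. Then lim_{z → +∞} ( ∫_z^{+∞} φ(v) dv ) / φ(z) = b²/(2p₂). -/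
open MeasureTheory Filter Topology

theorem aux_ratio (c a k : ℝ) (h : ℝ → ℝ) (hc : 0 < c) (ha : 0 < a) (hk : 0 < k)
    (hcont : ContinuousOn h (Set.Ioi 0)) (hanti : ∀ x y, 0 < x → x ≤ y → h y ≤ h x)
    (hge : ∀ x, 0 < x → a ≤ h x) (hlim : Tendsto h atTop (𝓝 a)) :
    Tendsto (fun z : ℝ => (∫ v in Set.Ioi z, Real.exp (-k * ∫ u in c..v, h u)) /
        Real.exp (-k * ∫ u in c..z, h u)) atTop (𝓝 (1 / (k * a))) := by
  have hint : ∀ v, 0 < v → IntervalIntegrable h volume c v := by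
    intro v hv
    apply ContinuousOn.intervalIntegrable
    apply hcont.mono
    intro x hx
    rw [Set.mem_uIcc] at hx
    rcases hx with hx | hx
    · exact lt_of_lt_of_le hc hx.1
    · exact lt_of_lt_of_le hv hx.1
  have hF : ∀ v, 0 < v → HasDerivAt (fun v => ∫ u in c..v, h u) (h v) v := by
    intro v hv
    exact intervalIntegral.integral_hasDerivAt_right (hint v hv)
      (hcont.stronglyMeasurableAtFilter isOpen_Ioi v hv)
      (hcont.continuousAt (Ioi_mem_nhds hv))
  set φ : ℝ → ℝ := fun v => Real.exp (-k * ∫ u in c..v, h u) with hφ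
  have hφd : ∀ v, 0 < v → HasDerivAt φ (-(k * h v * φ v)) v := by
    intro v hv
    have := ((hF v hv).const_mul (-k)).exp
    convert this using 1
    simp only [hφ]; ring
  have hpos : ∀ v, 0 < φ v := fun v => Real.exp_pos _
  have hlow : ∀ v, c ≤ v → a * (v - c) ≤ ∫ u in c..v, h u := by
    intro v hv
    have := intervalIntegral.integral_mono_on (μ := volume) (f := fun _ => a) (g := h) hv
      intervalIntegrable_const (hint v (hc.trans_le hv)) (fun x hx => hge x (hc.trans_le hx.1))
    rw [intervalIntegral.integral_const, smul_eq_mul] at this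
    linarith
  have hφ0 : Tendsto φ atTop (𝓝 0) := by
    apply Real.tendsto_exp_atBot.comp
    apply Tendsto.const_mul_atTop_of_neg (by linarith : -k < 0)
    apply tendsto_atTop_mono' atTop (f₁ := fun v => a * (v - c))
    · filter_upwards [eventually_ge_atTop c] with v hv using hlow v hv
    · exact Tendsto.const_mul_atTop ha (tendsto_atTop_add_const_right _ (-c) tendsto_id)
  have key : ∀ z, 0 < z → (k * a) * (∫ v in Set.Ioi z, φ v) ≤ φ z ∧
      φ z ≤ (k * h z) * (∫ v in Set.Ioi z, φ v) := by
    intro z hz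
    have hd : ∀ x ∈ Set.Ici z, HasDerivAt φ (-(k * h x * φ x)) x :=
      fun x hx => hφd x (lt_of_lt_of_le hz hx)
    have hnp : ∀ x ∈ Set.Ioi z, -(k * h x * φ x) ≤ 0 := by
      intro x hx
      have hx0 : 0 < x := lt_trans hz hx
      have : 0 < h x := ha.trans_le (hge x hx0)
      have := hpos x
      have : 0 < k * h x * φ x := by positivity
      linarith
    have hI := integrableOn_Ioi_deriv_of_nonpos' hd hnp hφ0
    have hE := integral_Ioi_of_hasDerivAt_of_nonpos' hd hnp hφ0
    have hI' : IntegrableOn (fun x => k * h x * φ x) (Set.Ioi z) := by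
      simpa using hI.neg
    have hE' : ∫ x in Set.Ioi z, k * h x * φ x = φ z := by
      rw [integral_neg] at hE; linarith
    have hle1 : ∀ x ∈ Set.Ioi z, k * a * φ x ≤ k * h x * φ x := by
      intro x hx
      have := hge x (lt_trans hz hx)
      have := hpos x
      gcongr
    have hφc : ContinuousOn φ (Set.Ioi z) := fun x hx =>
      (hφd x (lt_trans hz hx)).continuousAt.continuousWithinAt
    have hIa : IntegrableOn (fun x => k * a * φ x) (Set.Ioi z) := by
      refine Integrable.mono' hI' ((hφc.const_mul _).aestronglyMeasurable measurableSet_Ioi) ?_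
      filter_upwards [ae_restrict_mem measurableSet_Ioi] with x hx
      have := hpos x
      rw [Real.norm_of_nonneg (by positivity)]
      exact hle1 x hx
    have hIφ : IntegrableOn φ (Set.Ioi z) := by
      have := hIa.const_mul (k * a)⁻¹
      refine this.congr (Eventually.of_forall fun x => ?_)
      simp only
      field_simp
    constructor
    · rw [← hE', ← integral_const_mul]
      exact setIntegral_mono_on hIa hI' measurableSet_Ioi hle1
    · conv_lhs => rw [← hE']
      rw [← integral_const_mul]
      refine setIntegral_mono_on hI' (hIφ.const_mul _) measurableSet_Ioi fun x hx => ?_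
      have := hanti z x hz (le_of_lt hx)
      have := hpos x
      gcongr
  have hl : Tendsto (fun z => 1 / (k * h z)) atTop (𝓝 (1 / (k * a))) :=
    tendsto_const_nhds.div (hlim.const_mul k) (by positivity)
  refine tendsto_of_tendsto_of_tendsto_of_le_of_le' hl tendsto_const_nhds ?_ ?_
  · filter_upwards [eventually_gt_atTop 0] with z hz
    have h1 := (key z hz).2
    have : 0 < h z := ha.trans_le (hge z hz)
    change _ ≤ (∫ v in Set.Ioi z, φ v) / φ z
    rw [div_le_div_iff₀ (by positivity) (hpos z)]
    linarith
  · filter_upwards [eventually_gt_atTop 0] with z hz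
    have h1 := (key z hz).1
    change (∫ v in Set.Ioi z, φ v) / φ z ≤ _
    rw [div_le_div_iff₀ (hpos z) (by positivity)]
    linarith

/-- The L'Hopital computation in the proof of Theorem 2.7:
`lim_{z→+∞} (∫_z^∞ φ(v) dv) / φ(z) = b²/(2p₂)`, where
`φ(v) = exp(-(2/b²) ∫_c^v (p₂u² + p₁u + p₀)/u² du)`. -/
theorem stmt_7 (b c p₀ p₁ p₂ : ℝ) (hb : 0 < b) (hc : 0 < c)
    (hp₂ : 0 < p₂) (hp₁ : 0 ≤ p₁) (hp₀ : 0 ≤ p₀) :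
    Tendsto (fun z : ℝ =>
      (∫ v in Set.Ioi z,
          Real.exp (-(2 / b ^ 2) * ∫ u in c..v, (p₂ * u ^ 2 + p₁ * u + p₀) / u ^ 2)) /
        Real.exp (-(2 / b ^ 2) * ∫ u in c..z, (p₂ * u ^ 2 + p₁ * u + p₀) / u ^ 2))
      atTop (𝓝 (b ^ 2 / (2 * p₂))) := by
  have heq : ∀ u : ℝ, 0 < u →
      (p₂ * u ^ 2 + p₁ * u + p₀) / u ^ 2 = p₂ + p₁ / u + p₀ / u ^ 2 := by
    intro u hu
    field_simp
  have := aux_ratio c p₂ (2 / b ^ 2) (fun u => (p₂ * u ^ 2 + p₁ * u + p₀) / u ^ 2) hc hp₂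
    (by positivity) ?_ ?_ ?_ ?_
  · convert this using 2
    field_simp
  · apply ContinuousOn.div (by fun_prop) (by fun_prop)
    intro x hx
    have : (0 : ℝ) < x := hx
    positivity
  · intro x y hx hxy
    have hy := hx.trans_le hxy
    rw [heq x hx, heq y hy]
    gcongr
  · intro x hx
    rw [heq x hx]
    have : 0 ≤ p₁ / x := by positivity
    have : 0 ≤ p₀ / x ^ 2 := by positivity
    linarith
  · have h1 : Tendsto (fun u : ℝ => p₂ + p₁ / u + p₀ / u ^ 2) atTop (𝓝 (p₂ + 0 + 0)) :=
      (tendsto_const_nhds.add (tendsto_const_nhds.div_atTop tendsto_id)).add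
        (tendsto_const_nhds.div_atTop (tendsto_pow_atTop two_ne_zero))
    rw [add_zero, add_zero] at h1
    refine h1.congr' ?_
    filter_upwards [eventually_gt_atTop 0] with u hu using (heq u hu).symm
end

section
/- Let b > 0, c > 0, p₂ > 0, p₁ ≥ 0 and p₀ ≥ 0, define φ(v) = exp( −(2/b²)·∫_c^v (p₂·u² + p₁·u + p₀)/u² du ) for v ≥ c, let m(z) = ∫_c^z φ(v) dv and m(∞) = ∫_c^{+∞} φ(v) dv. Then m(∞) < +∞ and ∫_c^{+∞} ( m(∞) − m(z) ) / ( z²·φ(z) ) dz < +∞. -/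
open MeasureTheory Filter

/-- In the proof of Theorem 2.7: `m(∞) < +∞` and
`∫_c^∞ (m(∞) - m(z)) / (z² φ(z)) dz < +∞`, where
`φ(v) = exp(-(2/b²) ∫_c^v (p₂u² + p₁u + p₀)/u² du)` and `m(z) = ∫_c^z φ(v) dv`. -/
theorem stmt_8 (b c p₀ p₁ p₂ : ℝ) (hb : 0 < b) (hc : 0 < c)
    (hp₂ : 0 < p₂) (hp₁ : 0 ≤ p₁) (hp₀ : 0 ≤ p₀)
    (φ : ℝ → ℝ)
    (hφ : ∀ v, φ v = Real.exp (-(2 / b ^ 2) * ∫ u in c..v, (p₂ * u ^ 2 + p₁ * u + p₀) / u ^ 2))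
    (m : ℝ → ℝ) (hm : ∀ z, m z = ∫ v in c..z, φ v) :
    (∫⁻ v in Set.Ioi c, ENNReal.ofReal (φ v)) < ⊤ ∧
    (∫⁻ z in Set.Ioi c, ENNReal.ofReal
      (((∫ v in Set.Ioi c, φ v) - m z) / (z ^ 2 * φ z))) < ⊤ := by
  set k : ℝ := 2 / b ^ 2 * p₂ with hk
  have hb2 : 0 < 2 / b ^ 2 := by positivity
  have hkpos : 0 < k := by positivity
  have hcont : ∀ x y, c ≤ x → c ≤ y → IntervalIntegrable
      (fun u : ℝ => (p₂ * u ^ 2 + p₁ * u + p₀) / u ^ 2) volume x y := by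
    intro x y hx hy
    apply ContinuousOn.intervalIntegrable
    apply ContinuousOn.div (by fun_prop) (by fun_prop)
    intro u hu
    have : c ≤ u := le_trans (le_min hx hy) hu.1
    have : 0 < u := lt_of_lt_of_le hc this
    positivity
  have key : ∀ z v, c ≤ z → z ≤ v → φ v ≤ φ z * Real.exp (k * z) * Real.exp (-k * v) := by
    intro z v hz hv
    rw [hφ, hφ, ← Real.exp_add, ← Real.exp_add, Real.exp_le_exp,
      ← intervalIntegral.integral_add_adjacent_intervals (hcont c z le_rfl hz)
        (hcont z v hz (hz.trans hv))]
    have h1 : p₂ * (v - z) ≤ ∫ u in z..v, (p₂ * u ^ 2 + p₁ * u + p₀) / u ^ 2 := by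
      have : ∫ u in z..v, p₂ = p₂ * (v - z) := by
        rw [intervalIntegral.integral_const, smul_eq_mul, mul_comm]
      rw [← this]
      apply intervalIntegral.integral_mono_on hv (by simp) (hcont z v hz (hz.trans hv))
      intro u hu
      have hu0 : 0 < u := lt_of_lt_of_le hc (hz.trans hu.1)
      rw [le_div_iff₀ (by positivity)]
      have := mul_nonneg hp₁ hu0.le
      linarith
    have h2 := mul_le_mul_of_nonneg_left h1 hb2.le
    rw [hk]
    linarith
  have hpos : ∀ v, 0 < φ v := fun v => by rw [hφ]; exact Real.exp_pos _
  have hanti : AntitoneOn φ (Set.Ioi c) := by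
    intro z hz v hv hzv
    refine (key z v (le_of_lt hz) hzv).trans ?_
    rw [mul_assoc, ← Real.exp_add]
    apply mul_le_of_le_one_right (hpos z).le
    rw [Real.exp_le_one_iff]
    nlinarith
  have hint : IntegrableOn φ (Set.Ioi c) := by
    refine Integrable.mono' ((exp_neg_integrableOn_Ioi c hkpos).const_mul
      (φ c * Real.exp (k * c)))
      (aemeasurable_restrict_of_antitoneOn measurableSet_Ioi hanti).aestronglyMeasurable ?_
    refine (ae_restrict_iff' measurableSet_Ioi).2 (ae_of_all _ fun v hv => ?_)
    rw [Real.norm_of_nonneg (hpos v).le]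
    exact key c v le_rfl (le_of_lt hv)
  refine ⟨hint.lintegral_lt_top, ?_⟩
  have hI : IntegrableOn (fun z : ℝ => k⁻¹ * z ^ (-2 : ℝ)) (Set.Ioi c) :=
    (integrableOn_Ioi_rpow_of_lt (by norm_num) hc).const_mul _
  refine lt_of_le_of_lt ?_ hI.lintegral_lt_top
  refine setLIntegral_mono' measurableSet_Ioi fun z hz => ?_
  apply ENNReal.ofReal_le_ofReal
  have hz' : c < z := hz
  have hz0 : 0 < z := hc.trans hz'
  have hintz : IntegrableOn φ (Set.Ioi z) := hint.mono_set (Set.Ioi_subset_Ioi hz'.le)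
  have e1 : (∫ v in Set.Ioi c, φ v) - m z = ∫ v in Set.Ioi z, φ v := by
    rw [hm, ← intervalIntegral.integral_Ioi_sub_Ioi hint hz'.le]
    ring
  have e2 : ∫ v in Set.Ioi z, φ v ≤ φ z * k⁻¹ := by
    calc ∫ v in Set.Ioi z, φ v
        ≤ ∫ v in Set.Ioi z, φ z * Real.exp (k * z) * Real.exp (-k * v) :=
          setIntegral_mono_on hintz ((exp_neg_integrableOn_Ioi z hkpos).const_mul _)
            measurableSet_Ioi fun v hv => key z v hz'.le (le_of_lt hv)
      _ = φ z * k⁻¹ := by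
          rw [integral_const_mul, integral_exp_mul_Ioi (by linarith) z]
          have : Real.exp (k * z) * Real.exp (-k * z) = 1 := by
            rw [← Real.exp_add]; simp
          calc _ = φ z * (Real.exp (k * z) * Real.exp (-k * z)) * k⁻¹ := by
                field_simp
            _ = _ := by rw [this, mul_one]
  rw [e1, div_le_iff₀ (mul_pos (by positivity) (hpos z))]
  refine e2.trans (le_of_eq ?_)
  rw [Real.rpow_neg hz0.le, Real.rpow_two]
  field_simp
end

section
/- Let b > 0, c > 0, p₂ > 0, p₁ ≥ 0 and p₀ ≥ 0. With φ(v) = exp( −(2/b²)·∫_c^v (p₂·u² + p₁·u + p₀)/u² du ), m(z) = ∫_c^z φ(v) dv and m(∞) = ∫_c^{+∞} φ(v) dv, define for y ≥ c: M(y) = (2·m(y)/(b²·m(∞)))·∫_c^{+∞} (m(∞) − m(z))/(z²·φ(z)) dz − (2/b²)·∫_c^y (m(y) − m(z))/(z²·φ(z)) dz. Then M is twice differentiable on (c, +∞), satisfies (1/2)·b²·y²·M''(y) + (p₂·y² + p₁·y + p₀)·M'(y) = −1 for all y > c, M(c) = 0, and lim_{y → +∞} M(y) = 0. -/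
open MeasureTheory Filter Topology

theorem aux_deriv (f : ℝ → ℝ) (hf : ContinuousOn f (Set.Ioi 0)) (c v : ℝ) (hc : 0 < c) (hv : 0 < v) :
    HasDerivAt (fun y => ∫ u in c..y, f u) (f v) v := by
  have hs : Set.uIcc c v ⊆ Set.Ioi 0 := fun x hx => lt_of_lt_of_le (lt_min hc hv) hx.1
  exact intervalIntegral.integral_hasDerivAt_right ((hf.mono hs).intervalIntegrable)
    (hf.stronglyMeasurableAtFilter isOpen_Ioi v hv) (hf.continuousAt (Ioi_mem_nhds hv))

theorem aux_int (f : ℝ → ℝ) (hf : ContinuousOn f (Set.Ioi 0)) (c v : ℝ) (hc : 0 < c) (hv : 0 < v) :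
    IntervalIntegrable f volume c v := by
  have hs : Set.uIcc c v ⊆ Set.Ioi 0 := fun x hx => lt_of_lt_of_le (lt_min hc hv) hx.1
  exact (hf.mono hs).intervalIntegrable


/-- Boundary value problem (2.7): the explicit function `M` is twice differentiable on
`(c, +∞)`, solves `(1/2) b² y² M''(y) + (p₂ y² + p₁ y + p₀) M'(y) = -1` there,
vanishes at `c`, and tends to `0` at `+∞`. -/
theorem stmt_9 (b c p₀ p₁ p₂ : ℝ) (hb : 0 < b) (hc : 0 < c)
    (hp₂ : 0 < p₂) (hp₁ : 0 ≤ p₁) (hp₀ : 0 ≤ p₀)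
    (φ : ℝ → ℝ)
    (hφ : ∀ v, φ v = Real.exp (-(2 / b ^ 2) * ∫ u in c..v, (p₂ * u ^ 2 + p₁ * u + p₀) / u ^ 2))
    (m : ℝ → ℝ) (hm : ∀ z, m z = ∫ v in c..z, φ v)
    (minf : ℝ) (hminf : minf = ∫ v in Set.Ioi c, φ v)
    (M : ℝ → ℝ)
    (hM : ∀ y, M y = (2 * m y / (b ^ 2 * minf)) *
        (∫ z in Set.Ioi c, (minf - m z) / (z ^ 2 * φ z))
      - (2 / b ^ 2) * ∫ z in c..y, (m y - m z) / (z ^ 2 * φ z)) :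
    (∀ y ∈ Set.Ioi c, DifferentiableAt ℝ M y ∧ DifferentiableAt ℝ (deriv M) y ∧
        (1 / 2) * b ^ 2 * y ^ 2 * deriv (deriv M) y
          + (p₂ * y ^ 2 + p₁ * y + p₀) * deriv M y = -1)
    ∧ M c = 0 ∧ Tendsto M atTop (𝓝 0) := by
  set k : ℝ := 2 / b ^ 2 with hk
  have hk0 : 0 < k := by positivity
  set P : ℝ → ℝ := fun u => (p₂ * u ^ 2 + p₁ * u + p₀) / u ^ 2 with hP
  have hPc : ContinuousOn P (Set.Ioi 0) := by
    apply ContinuousOn.div (by fun_prop) (by fun_prop)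
    intro x hx
    have : (0 : ℝ) < x := hx
    positivity
  have hφpos : ∀ v, 0 < φ v := fun v => by rw [hφ]; exact Real.exp_pos _
  have hφd : ∀ v, 0 < v → HasDerivAt φ (-k * P v * φ v) v := by
    intro v hv
    have h := ((aux_deriv P hPc c v hc hv).const_mul (-k)).exp
    have e : φ = fun v => Real.exp (-k * ∫ u in c..v, P u) := funext hφ
    rw [e]
    convert h using 1
    ring
  have hφc : ContinuousOn φ (Set.Ioi 0) := fun v hv => (hφd v hv).continuousAt.continuousWithinAt
  have hmd : ∀ v, 0 < v → HasDerivAt m (φ v) v := by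
    intro v hv
    rw [show m = _ from funext hm]
    exact aux_deriv φ hφc c v hc hv
  have hmc : ContinuousOn m (Set.Ioi 0) := fun v hv => (hmd v hv).continuousAt.continuousWithinAt
  set g : ℝ → ℝ := fun z => 1 / (z ^ 2 * φ z) with hg
  have hgc : ContinuousOn g (Set.Ioi 0) := by
    apply ContinuousOn.div (by fun_prop) (by fun_prop)
    intro x hx
    have : (0 : ℝ) < x := hx
    have := hφpos x
    positivity
  have hg0 : ∀ z, 0 ≤ g z := fun z => by
    have := hφpos z
    simp only [hg]; positivity
  have hmgc : ContinuousOn (fun z => m z * g z) (Set.Ioi 0) := hmc.mul hgc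
  set I : ℝ := ∫ z in Set.Ioi c, (minf - m z) / (z ^ 2 * φ z) with hI
  -- bound on φ
  have hφb : ∀ z v, c ≤ z → z ≤ v → φ v ≤ φ z * Real.exp (-(k * p₂) * (v - z)) := by
    intro z v hz hv
    have hz0 : 0 < z := hc.trans_le hz
    have hv0 : 0 < v := hz0.trans_le hv
    have h1 : (∫ u in c..v, P u) - (∫ u in c..z, P u) = ∫ u in z..v, P u :=
      intervalIntegral.integral_interval_sub_left (aux_int P hPc c v hc hv0) (aux_int P hPc c z hc hz0)
    have h2 : (∫ u in z..v, p₂) ≤ ∫ u in z..v, P u := by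
      apply intervalIntegral.integral_mono_on hv (by simp) (aux_int P hPc z v hz0 hv0)
      intro x hx
      have hx0 : 0 < x := hz0.trans_le hx.1
      simp only [hP]
      rw [le_div_iff₀ (by positivity)]
      have := mul_nonneg hp₁ hx0.le
      linarith
    rw [intervalIntegral.integral_const, smul_eq_mul] at h2
    rw [hφ v, hφ z, ← Real.exp_add]
    apply Real.exp_le_exp.2
    change -k * (∫ u in c..v, P u) ≤ -k * (∫ u in c..z, P u) + _
    nlinarith [mul_le_mul_of_nonneg_left h2 hk0.le]
  have hkp : -(k * p₂) < 0 := by have := mul_pos hk0 hp₂; linarith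
  have hexpI : ∀ z, IntegrableOn (fun v => φ z * Real.exp (-(k * p₂) * (v - z))) (Set.Ioi z) := by
    intro z
    have := ((integrableOn_exp_mul_Ioi hkp z).const_mul (φ z * Real.exp ((k * p₂) * z)))
    refine this.congr (ae_of_all _ fun v => ?_)
    simp only
    rw [mul_assoc, ← Real.exp_add]
    ring_nf
  have hexpV : ∀ z, ∫ v in Set.Ioi z, φ z * Real.exp (-(k * p₂) * (v - z)) = φ z / (k * p₂) := by
    intro z
    have e : ∀ v, φ z * Real.exp (-(k * p₂) * (v - z))
        = (φ z * Real.exp ((k * p₂) * z)) * Real.exp (-(k * p₂) * v) := by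
      intro v
      rw [mul_assoc, ← Real.exp_add]
      ring_nf
    simp_rw [e]
    rw [integral_const_mul, integral_exp_mul_Ioi hkp, neg_div_neg_eq, mul_assoc, mul_div_assoc',
      ← Real.exp_add]
    ring_nf
    simp
  have hsub : ∀ z, c ≤ z → Set.Ioi z ⊆ Set.Ioi 0 := fun z hz x hx => hc.trans_le (hz.trans (le_of_lt hx))
  have hφI : ∀ z, c ≤ z → IntegrableOn φ (Set.Ioi z) := by
    intro z hz
    refine Integrable.mono' (hexpI z) ((hφc.mono (hsub z hz)).aestronglyMeasurable measurableSet_Ioi) ?_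
    refine (ae_restrict_iff' measurableSet_Ioi).2 (ae_of_all _ fun v hv => ?_)
    rw [Real.norm_of_nonneg (hφpos v).le]
    exact hφb z v hz (le_of_lt hv)
  have htail : ∀ z, c ≤ z → minf - m z = ∫ v in Set.Ioi z, φ v := by
    intro z hz
    rw [hminf, hm z, sub_eq_iff_eq_add,
      ← intervalIntegral.integral_Ioi_sub_Ioi (hφI c le_rfl) hz]
    ring
  have htail0 : ∀ z, c ≤ z → 0 ≤ minf - m z := fun z hz => by
    rw [htail z hz]; exact integral_nonneg fun v => (hφpos v).le
  have htailb : ∀ z, c ≤ z → minf - m z ≤ φ z / (k * p₂) := fun z hz => by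
    rw [htail z hz, ← hexpV z]
    exact setIntegral_mono_on (hφI z hz) (hexpI z) measurableSet_Ioi
      fun v hv => hφb z v hz (le_of_lt hv)
  have hmlim : Tendsto m atTop (𝓝 minf) := by
    rw [hminf, show m = _ from funext hm]
    exact intervalIntegral_tendsto_integral_Ioi c (hφI c le_rfl) tendsto_id
  have hmmono : ∀ z y, c ≤ z → z ≤ y → m z ≤ m y := by
    intro z y hz hy
    have h1 : (∫ u in c..y, φ u) - (∫ u in c..z, φ u) = ∫ u in z..y, φ u :=
      intervalIntegral.integral_interval_sub_left (aux_int φ hφc c y hc (by linarith))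
        (aux_int φ hφc c z hc (by linarith))
    have h2 : 0 ≤ ∫ u in z..y, φ u := intervalIntegral.integral_nonneg hy fun u _ => (hφpos u).le
    rw [hm z, hm y]; linarith
  have hmpos : 0 < m (c + 1) := by
    rw [hm]
    exact intervalIntegral.intervalIntegral_pos_of_pos (aux_int φ hφc c (c+1) hc (by linarith))
      hφpos (by linarith)
  have hminf0 : 0 < minf := by
    have := htail0 (c + 1) (by linarith)
    linarith
  have hdiv : ∀ a z, (a - m z) / (z ^ 2 * φ z) = (a - m z) * g z := fun a z => by
    simp only [hg]; rw [mul_one_div]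
  have hdomI : IntegrableOn (fun z => (minf - m z) * g z) (Set.Ioi c) := by
    have h1 : IntegrableOn (fun z : ℝ => (1 / (k * p₂)) * z ^ (-2 : ℝ)) (Set.Ioi c) :=
      (integrableOn_Ioi_rpow_of_lt (by norm_num) hc).const_mul _
    refine Integrable.mono' h1 ((((continuousOn_const.sub hmc).mul hgc).mono
      (hsub c le_rfl)).aestronglyMeasurable measurableSet_Ioi) ?_
    refine (ae_restrict_iff' measurableSet_Ioi).2 (ae_of_all _ fun z hz => ?_)
    have hz : c < z := hz
    have hz0 : 0 < z := hc.trans hz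
    rw [Real.norm_of_nonneg (mul_nonneg (htail0 z hz.le) (hg0 z))]
    refine (mul_le_mul_of_nonneg_right (htailb z hz.le) (hg0 z)).trans (le_of_eq ?_)
    have := hφpos z
    rw [Real.rpow_neg hz0.le, show (2:ℝ) = ((2:ℕ):ℝ) by norm_num, Real.rpow_natCast]
    simp only [hg]
    field_simp
  have hlimF : Tendsto (fun y => ∫ z in c..y, (m y - m z) * g z) atTop (𝓝 I) := by
    have hIe : I = ∫ z in Set.Ioi c, (minf - m z) * g z := by
      rw [hI]; simp_rw [hdiv]
    rw [hIe]
    have key : Tendsto (fun y => ∫ z in Set.Ioi c, (Set.Iic y).indicator (fun z => (m y - m z) * g z) z)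
        atTop (𝓝 (∫ z in Set.Ioi c, (minf - m z) * g z)) := by
      refine tendsto_integral_filter_of_dominated_convergence (fun z => (minf - m z) * g z) ?_ ?_ hdomI ?_
      · refine Eventually.of_forall fun y => ?_
        exact ((((continuousOn_const.sub hmc).mul hgc).mono
          (hsub c le_rfl)).aestronglyMeasurable measurableSet_Ioi).indicator measurableSet_Iic
      · filter_upwards [eventually_ge_atTop c] with y hy
        refine (ae_restrict_iff' measurableSet_Ioi).2 (ae_of_all _ fun z hz => ?_)
        have hz : c < z := hz
        by_cases h : z ≤ y
        · rw [Set.indicator_of_mem (show z ∈ Set.Iic y from h),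
            Real.norm_of_nonneg (mul_nonneg (sub_nonneg.2 (hmmono z y hz.le h)) (hg0 z))]
          have := htail0 y hy
          exact mul_le_mul_of_nonneg_right (by linarith) (hg0 z)
        · rw [Set.indicator_of_notMem (show z ∉ Set.Iic y from h), norm_zero]
          exact mul_nonneg (htail0 z hz.le) (hg0 z)
      · refine ae_of_all _ fun z => ?_
        refine ((hmlim.sub_const (m z)).mul_const (g z)).congr' ?_
        filter_upwards [eventually_ge_atTop z] with y hy
        rw [Set.indicator_of_mem (show z ∈ Set.Iic y from hy)]
    refine key.congr' ?_
    filter_upwards [eventually_ge_atTop c] with y hy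
    rw [intervalIntegral.integral_of_le hy, setIntegral_indicator measurableSet_Iic, Set.Ioi_inter_Iic]
  have hM' : ∀ y, M y = k * (m y / minf * I - ∫ z in c..y, (m y - m z) * g z) := by
    intro y
    rw [hM y]
    simp_rw [hdiv]
    rw [hk]
    field_simp
  have hFe : ∀ y, 0 < y → (∫ z in c..y, (m y - m z) * g z)
      = m y * (∫ z in c..y, g z) - ∫ z in c..y, m z * g z := by
    intro y hy
    simp_rw [sub_mul]
    rw [intervalIntegral.integral_sub ((aux_int g hgc c y hc hy).const_mul _) (aux_int _ hmgc c y hc hy),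
      intervalIntegral.integral_const_mul]
  have hMd : ∀ y, 0 < y → HasDerivAt M (k * φ y * (I / minf - ∫ z in c..y, g z)) y := by
    intro y hy
    have h := ((((hmd y hy).div_const minf).mul_const I).sub
      (((hmd y hy).mul (aux_deriv g hgc c y hc hy)).sub (aux_deriv _ hmgc c y hc hy))).const_mul k
    have h2 := h.congr_of_eventuallyEq (f₁ := M) (by
      filter_upwards [Ioi_mem_nhds hy] with x hx
      rw [hM' x, hFe x hx]
      rfl)
    refine h2.congr_deriv ?_
    ring
  have hMdd : ∀ y, 0 < y → HasDerivAt (deriv M)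
      (k * (-k * P y * φ y) * (I / minf - ∫ z in c..y, g z) - k * φ y * g y) y := by
    intro y hy
    have h := ((hφd y hy).const_mul k).mul ((aux_deriv g hgc c y hc hy).const_sub (I / minf))
    have h2 := h.congr_of_eventuallyEq (f₁ := deriv M) (by
      filter_upwards [Ioi_mem_nhds hy] with x hx
      rw [(hMd x hx).deriv]
      rfl)
    refine h2.congr_deriv ?_
    ring
  refine ⟨fun y hy => ?_, ?_, ?_⟩
  · have hy0 : 0 < y := hc.trans hy
    refine ⟨(hMd y hy0).differentiableAt, (hMdd y hy0).differentiableAt, ?_⟩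
    rw [(hMd y hy0).deriv, (hMdd y hy0).deriv]
    have := hφpos y
    generalize (I / minf - ∫ z in c..y, g z) = J
    simp only [hg, hP, hk]
    field_simp
    ring
  · rw [hM' c, hm c]; simp
  · rw [show M = _ from funext hM']
    have h := (((hmlim.div_const minf).mul_const I).sub hlimF).const_mul k
    rw [div_self hminf0.ne'] at h
    simpa using h
end

section
/- Let b > 0, x > 0, p₂ > 0, p₁ ≥ 0 and p₀ ≥ 0, and define f(v) = v^{−2p₁/b²} · exp( 2p₀/(b²·v) − 2p₂·v/b² ) for v > 0. If p₀ > 0 or 2p₁ ≥ b², then ∫_0^x f(v) dv = +∞ and lim_{ε → 0⁺} ( ∫_ε^x f(v) dv ) / ( ∫_ε^{+∞} f(v) dv ) = 1. -/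
open MeasureTheory Filter Topology

lemma aux_lower (α β γ x : ℝ) (hx : 0 < x) (hα : 0 ≤ α) (hβ : 0 ≤ β) (hγ : 0 < γ)
    (hcase : 0 < β ∨ 1 ≤ α) :
    ∃ c > 0, ∀ v, 0 < v → v ≤ x → c * v⁻¹ ≤ v ^ (-α) * Real.exp (β / v - γ * v) := by
  have hexp : ∀ v, v ≤ x → Real.exp (-(γ * x)) ≤ Real.exp (-(γ * v)) := by
    intro v hv
    apply Real.exp_le_exp.2
    nlinarith
  rcases hcase with h | h
  · refine ⟨x ^ (-α) * (β * Real.exp (-(γ * x))), by positivity, ?_⟩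
    intro v hv hvx
    rw [sub_eq_add_neg (β / v), Real.exp_add]
    have h1 : x ^ (-α) ≤ v ^ (-α) := Real.rpow_le_rpow_of_nonpos hv hvx (by linarith)
    have h2 : β * v⁻¹ ≤ Real.exp (β / v) := by
      have := Real.add_one_le_exp (β / v)
      rw [← div_eq_mul_inv]; linarith
    calc x ^ (-α) * (β * Real.exp (-(γ * x))) * v⁻¹
        = x ^ (-α) * ((β * v⁻¹) * Real.exp (-(γ * x))) := by ring
      _ ≤ _ := by
        have := hexp v hvx
        gcongr
  · refine ⟨x ^ (-(α - 1)) * Real.exp (-(γ * x)), by positivity, ?_⟩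
    intro v hv hvx
    rw [sub_eq_add_neg (β / v), Real.exp_add]
    have h1 : x ^ (-(α - 1)) ≤ v ^ (-(α - 1)) :=
      Real.rpow_le_rpow_of_nonpos hv hvx (by linarith)
    have h2 : 1 ≤ Real.exp (β / v) := Real.one_le_exp (by positivity)
    have h3 : v ^ (-α) = v ^ (-(α - 1)) * v⁻¹ := by
      rw [← Real.rpow_neg_one v, ← Real.rpow_add hv]; congr 1; ring
    rw [h3]
    calc x ^ (-(α - 1)) * Real.exp (-(γ * x)) * v⁻¹
        = x ^ (-(α - 1)) * v⁻¹ * (1 * Real.exp (-(γ * x))) := by ring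
      _ ≤ _ := by
        have := hexp v hvx
        gcongr

lemma aux_main (x : ℝ) (α β γ : ℝ) (hx : 0 < x) (hα : 0 ≤ α) (hβ : 0 ≤ β) (hγ : 0 < γ)
    (hcase : 0 < β ∨ 1 ≤ α) (f : ℝ → ℝ)
    (hf : ∀ v, f v = v ^ (-α) * Real.exp (β / v - γ * v)) :
    (∫⁻ v in Set.Ioo (0 : ℝ) x, ENNReal.ofReal (f v)) = ⊤ ∧
    Tendsto (fun ε : ℝ => (∫ v in ε..x, f v) / ∫ v in Set.Ioi ε, f v)
      (𝓝[>] 0) (𝓝 1) := by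
  obtain ⟨c, hc, hlow⟩ := aux_lower α β γ x hx hα hβ hγ hcase
  have hpos : ∀ v, 0 < v → 0 ≤ f v := by intro v hv; rw [hf]; positivity
  have hcont : ContinuousOn f (Set.Ioi 0) := by
    have : f = fun v => v ^ (-α) * Real.exp (β / v - γ * v) := funext hf
    rw [this]
    intro v hv
    have hv' : v ≠ 0 := ne_of_gt hv
    apply ContinuousAt.continuousWithinAt
    apply ContinuousAt.mul
    · exact Real.continuousAt_rpow_const _ _ (Or.inl hv')
    · apply Real.continuous_exp.continuousAt.comp
      exact (continuousAt_const.div continuousAt_id hv').sub (by fun_prop)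
  have hint : ∀ ε, 0 < ε → IntegrableOn f (Set.Ioi ε) := by
    intro ε hε
    have h1 : IntegrableOn (fun v => ε ^ (-α) * Real.exp (β / ε) * Real.exp (-γ * v))
        (Set.Ioi ε) := (exp_neg_integrableOn_Ioi ε hγ).const_mul _
    refine Integrable.mono' h1 ((hcont.mono ?_).aestronglyMeasurable measurableSet_Ioi) ?_
    · intro v hv; exact lt_trans hε hv
    · filter_upwards [ae_restrict_mem measurableSet_Ioi] with v hv
      have hv : ε < v := hv
      have hv0 : 0 < v := hε.trans hv
      rw [Real.norm_of_nonneg (hpos v hv0), hf, sub_eq_add_neg, Real.exp_add, ← mul_assoc,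
        neg_mul]
      have : v ^ (-α) ≤ ε ^ (-α) := Real.rpow_le_rpow_of_nonpos hε hv.le (by linarith)
      gcongr
  have hI : Tendsto (fun ε : ℝ => ∫ v in ε..x, f v) (𝓝[>] 0) atTop := by
    have h1 : Tendsto (fun ε : ℝ => c * (Real.log x - Real.log ε)) (𝓝[>] 0) atTop := by
      apply Tendsto.const_mul_atTop hc
      apply tendsto_atTop_add_const_left
      exact tendsto_neg_atBot_atTop.comp Real.tendsto_log_nhdsGT_zero
    refine tendsto_atTop_mono' _ ?_ h1
    filter_upwards [Ioo_mem_nhdsGT hx] with ε hε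
    have hε0 := hε.1
    have hεx := hε.2
    rw [← Real.log_div hx.ne' hε0.ne', ← integral_inv_of_pos hε0 hx,
      ← intervalIntegral.integral_const_mul]
    apply intervalIntegral.integral_mono_on hεx.le
    · apply IntervalIntegrable.const_mul
      apply intervalIntegral.intervalIntegrable_inv
      · intro v hv
        rw [Set.uIcc_of_le hεx.le] at hv
        exact (hε0.trans_le hv.1).ne'
      · exact continuousOn_id
    · rw [intervalIntegrable_iff_integrableOn_Ioc_of_le hεx.le]
      exact (hint ε hε0).mono_set Set.Ioc_subset_Ioi_self
    · intro v hv
      rw [hf]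
      exact hlow v (hε0.trans_le hv.1) hv.2
  constructor
  · have h2 := ENNReal.tendsto_ofReal_nhds_top.2 hI
    rw [eq_top_iff]
    refine le_of_tendsto h2 ?_
    filter_upwards [Ioo_mem_nhdsGT hx] with ε hε
    have hε0 := hε.1
    have hεx := hε.2
    rw [intervalIntegral.integral_of_le hεx.le, 
      integral_Ioc_eq_integral_Ioo, ofReal_integral_eq_lintegral_ofReal]
    · exact lintegral_mono_set (Set.Ioo_subset_Ioo_left hε0.le)
    · exact (hint ε hε0).mono_set Set.Ioo_subset_Ioi_self
    · filter_upwards [ae_restrict_mem measurableSet_Ioo] with v hv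
      exact hpos v (hε0.trans hv.1)
  · set K := ∫ v in Set.Ioi x, f v with hK
    have h3 : Tendsto (fun ε : ℝ => 1 - K / ((∫ v in ε..x, f v) + K)) (𝓝[>] 0) (𝓝 1) := by
      have : Tendsto (fun ε : ℝ => K / ((∫ v in ε..x, f v) + K)) (𝓝[>] 0) (𝓝 0) :=
        (tendsto_atTop_add_const_right _ K hI).const_div_atTop K
      simpa using this.const_sub 1
    refine h3.congr' ?_
    have hKn : 0 ≤ K := setIntegral_nonneg measurableSet_Ioi
      (fun v hv => hpos v (hx.trans hv))
    filter_upwards [Ioo_mem_nhdsGT hx, hI.eventually_gt_atTop 0] with ε hε hIpos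
    have hε0 := hε.1
    have hεx := hε.2
    have hsplit : ∫ v in Set.Ioi ε, f v = (∫ v in ε..x, f v) + K := by
      rw [hK, intervalIntegral.integral_of_le hεx.le, ← setIntegral_union
        (Set.Ioc_disjoint_Ioi le_rfl) measurableSet_Ioi
        ((hint ε hε0).mono_set Set.Ioc_subset_Ioi_self) (hint x hx),
        Set.Ioc_union_Ioi_eq_Ioi hεx.le]
    rw [hsplit]
    have : (∫ v in ε..x, f v) + K ≠ 0 := by positivity
    field_simp
    ring

/-- End of the proof of Theorem 2.7 (divergent case): if `p₀ > 0` or `2p₁ ≥ b²`, then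
`∫_0^x f(v) dv = +∞` and `lim_{ε→0⁺} (∫_ε^x f) / (∫_ε^∞ f) = 1`, where
`f(v) = v^{-2p₁/b²} exp(2p₀/(b²v) - 2p₂v/b²)`. -/
theorem stmt_10 (b x p₀ p₁ p₂ : ℝ) (hb : 0 < b) (hx : 0 < x)
    (hp₂ : 0 < p₂) (hp₁ : 0 ≤ p₁) (hp₀ : 0 ≤ p₀)
    (f : ℝ → ℝ)
    (hf : ∀ v, f v = v ^ (-(2 * p₁) / b ^ 2) *
      Real.exp (2 * p₀ / (b ^ 2 * v) - 2 * p₂ * v / b ^ 2))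
    (hcase : 0 < p₀ ∨ b ^ 2 ≤ 2 * p₁) :
    (∫⁻ v in Set.Ioo (0 : ℝ) x, ENNReal.ofReal (f v)) = ⊤ ∧
    Tendsto (fun ε : ℝ => (∫ v in ε..x, f v) / ∫ v in Set.Ioi ε, f v)
      (𝓝[>] 0) (𝓝 1) := by
  refine aux_main x (2 * p₁ / b ^ 2) (2 * p₀ / b ^ 2) (2 * p₂ / b ^ 2) hx (by positivity)
    (by positivity) (by positivity) ?_ f ?_
  · rcases hcase with h | h
    · left; positivity
    · right; rw [le_div_iff₀ (by positivity)]; linarith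
  · intro v
    rw [hf, neg_div, div_div, mul_div_right_comm (2 * p₂)]
end
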